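/- arXiv:2501.14053 — 2 statements merged into one kernel-verified Lean document; each statement's English description precedes it below -/
import Mathlib

section
/- Let Q ≪ P be probability measures with r = dQ/dP and width function w_P(h) = P{r ≥ h}. Let H be a nonnegative real random variable with probability density w_P. Then the channel simulation divergence D_CS(Q‖P) = -∫₀^∞ w_P(h) · log₂ w_P(h) dh and the Kullback–Leibler divergence D_KL(Q‖P) (in bits) satisfy D_CS(Q‖P) - D_KL(Q‖P) = h(ln H) - log₂ e, where h(ln H) denotes the differential entropy (in bits) of the random variable ln H. -/
open MeasureTheory Real

/-- A possibly non-measurable density `g` of a finite measure with measurable density `v`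
satisfies `φ ∘ g = φ ∘ v` a.e. as soon as `φ ∘ g` is a.e. measurable and `φ` is continuous. -/
lemma aux_ae_eq (v g φ : ℝ → ℝ) (hφ : Continuous φ) (hv : Measurable v) (hv0 : 0 ≤ v)
    (hg0 : 0 ≤ g)
    (hfin : ∫⁻ t, ENNReal.ofReal (v t) ≠ ⊤)
    (h : (volume : Measure ℝ).withDensity (fun t => ENNReal.ofReal (g t))
      = volume.withDensity (fun t => ENNReal.ofReal (v t)))
    (hm : AEStronglyMeasurable (fun t => φ (g t)) (volume : Measure ℝ)) :
    (fun t => φ (g t)) =ᵐ[volume] fun t => φ (v t) := by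
  have hset : ∀ s : Set ℝ, MeasurableSet s →
      ∫⁻ t in s, ENNReal.ofReal (g t) = ∫⁻ t in s, ENNReal.ofReal (v t) := by
    intro s hs
    rw [← withDensity_apply _ hs, ← withDensity_apply _ hs, h]
  have hle : ∀ᵐ t, v t ≤ g t := by
    obtain ⟨g', hg'm, hg'le, hg'eq⟩ :=
      exists_measurable_le_lintegral_eq (volume : Measure ℝ) (fun t => ENNReal.ofReal (g t))
    have htot : ∫⁻ t, ENNReal.ofReal (g t) = ∫⁻ t, ENNReal.ofReal (v t) := by
      simpa using hset Set.univ MeasurableSet.univ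
    have h1 : g' ≤ᵐ[volume] fun t => ENNReal.ofReal (v t) := by
      refine ae_le_of_forall_setLIntegral_le_of_sigmaFinite hg'm ?_
      intro s hs _
      rw [← hset s hs]
      exact lintegral_mono hg'le
    have h2 := ae_eq_of_ae_le_of_lintegral_le h1 (by rw [← hg'eq, htot]; exact hfin)
      hv.ennreal_ofReal.aemeasurable (by rw [← hg'eq, htot])
    filter_upwards [h2] with t ht
    have := hg'le t
    rw [ht] at this
    exact (ENNReal.ofReal_le_ofReal_iff (hg0 t)).1 this
  set m := hm.mk _ with hmdef
  have hmm : Measurable m := hm.stronglyMeasurable_mk.measurable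
  have hmg : (fun t => φ (g t)) =ᵐ[volume] m := hm.ae_eq_mk
  have key : ∀ n k : ℕ, volume {t | 1 / ((n : ℝ) + 1) ≤ |m t - φ (v t)| ∧ v t ≤ k} = 0 := by
    intro n k
    set A := {t | 1 / ((n : ℝ) + 1) ≤ |m t - φ (v t)| ∧ v t ≤ k} with hA
    have hAm : MeasurableSet A := by
      refine MeasurableSet.inter ?_ ?_
      · exact measurableSet_le measurable_const
          (continuous_abs.measurable.comp (hmm.sub (hφ.measurable.comp hv)))
      · exact measurableSet_le hv measurable_const
    have huc : UniformContinuousOn φ (Set.Icc 0 ((k : ℝ) + 1)) :=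
      isCompact_Icc.uniformContinuousOn_of_continuous hφ.continuousOn
    obtain ⟨δ, hδ, hδ'⟩ := Metric.uniformContinuousOn_iff.1 huc (1 / ((n : ℝ) + 1)) (by positivity)
    set d := min δ 1 with hd
    have hd0 : 0 < d := lt_min hδ one_pos
    have hgd : ∀ᵐ t ∂(volume.restrict A),
        ENNReal.ofReal (v t) + ENNReal.ofReal d ≤ ENNReal.ofReal (g t) := by
      rw [ae_restrict_iff' hAm]
      filter_upwards [hle, hmg] with t h1 h2 hAt
      rw [← ENNReal.ofReal_add (hv0 t) hd0.le]
      apply ENNReal.ofReal_le_ofReal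
      by_contra hcon
      push Not at hcon
      have hv0t : 0 ≤ v t := hv0 t
      have hd1 : d ≤ 1 := min_le_right _ _
      have hd2 : d ≤ δ := min_le_left _ _
      have hk : v t ≤ k := hAt.2
      have := hδ' (g t) ⟨hg0 t, by linarith⟩ (v t) ⟨hv0t, by linarith⟩ (by
        rw [Real.dist_eq, abs_of_nonneg (by linarith)]; linarith)
      rw [Real.dist_eq] at this
      have h3 := hAt.1
      rw [← h2] at h3
      linarith
    have h1 := lintegral_mono_ae hgd
    rw [hset A hAm, lintegral_add_right _ measurable_const, lintegral_const,
      Measure.restrict_apply_univ] at h1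
    have hfA : ∫⁻ t in A, ENNReal.ofReal (v t) ≠ ⊤ :=
      ne_top_of_le_ne_top hfin (setLIntegral_le_lintegral _ _)
    have h2 : ENNReal.ofReal d * volume A ≤ 0 := by
      refine (ENNReal.add_le_add_iff_left hfA).1 ?_
      simpa using h1
    have h3 := le_antisymm h2 zero_le
    rcases mul_eq_zero.1 h3 with h4 | h4
    · rw [ENNReal.ofReal_eq_zero] at h4; linarith
    · exact h4
  have key2 : ∀ᵐ t, ∀ n k : ℕ, ¬ (1 / ((n : ℝ) + 1) ≤ |m t - φ (v t)| ∧ v t ≤ k) := by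
    rw [ae_all_iff]; intro n
    rw [ae_all_iff]; intro k
    rw [ae_iff]
    simpa only [not_not] using key n k
  filter_upwards [key2, hmg] with t h1 h2
  by_contra hne
  rw [h2] at hne
  obtain ⟨k, hk⟩ := exists_nat_ge (v t)
  obtain ⟨n, hn⟩ := exists_nat_one_div_lt (abs_pos.2 (sub_ne_zero.2 hne))
  exact h1 n k ⟨hn.le, hk⟩

lemma aux_exp_image (s : Set ℝ) : Real.exp '' s = Set.Ioi 0 ∩ Real.log ⁻¹' s := by
  ext x
  constructor
  · rintro ⟨y, hy, rfl⟩
    exact ⟨Real.exp_pos y, by simpa using hy⟩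
  · rintro ⟨hx, hx'⟩
    exact ⟨Real.log x, hx', Real.exp_log hx⟩

lemma aux_exp_univ : Real.exp '' Set.univ = Set.Ioi 0 := by
  rw [aux_exp_image]; simp

/-- Change of variables for the density of the logarithm. -/
lemma aux_map (w : ℝ → ℝ) (hw : Measurable w) :
    ((volume.restrict (Set.Ioi (0 : ℝ))).withDensity fun h => ENNReal.ofReal (w h)).map Real.log
      = volume.withDensity fun t => ENNReal.ofReal (Real.exp t * w (Real.exp t)) := by
  ext s hs
  rw [Measure.map_apply Real.measurable_log hs, withDensity_apply _ (Real.measurable_log hs),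
    withDensity_apply _ hs, Measure.restrict_restrict (Real.measurable_log hs), Set.inter_comm,
    ← aux_exp_image, lintegral_image_eq_lintegral_abs_deriv_mul hs
      (fun x _ => (Real.hasDerivAt_exp x).hasDerivWithinAt) Real.exp_injective.injOn]
  refine lintegral_congr fun t => ?_
  rw [abs_of_pos (Real.exp_pos t), ENNReal.ofReal_mul (Real.exp_pos t).le]

lemma aux_int (f : ℝ → ℝ) :
    ∫ h in Set.Ioi (0 : ℝ), f h = ∫ t, Real.exp t * f (Real.exp t) := by
  rw [← aux_exp_univ, integral_image_eq_integral_abs_deriv_smul MeasurableSet.univ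
      (fun x _ => (Real.hasDerivAt_exp x).hasDerivWithinAt) Real.exp_injective.injOn]
  simp

lemma aux_integrable (f : ℝ → ℝ) :
    IntegrableOn f (Set.Ioi (0 : ℝ)) ↔ Integrable (fun t => Real.exp t * f (Real.exp t)) := by
  rw [← aux_exp_univ, integrableOn_image_iff_integrableOn_abs_deriv_smul MeasurableSet.univ
      (fun x _ => (Real.hasDerivAt_exp x).hasDerivWithinAt) Real.exp_injective.injOn]
  simp

lemma aux_inner (y : ℝ) (hy : 0 ≤ y) :
    ∫ h in Set.Ioi (0 : ℝ), (if h ≤ y then Real.log h else 0) = y * Real.log y - y := by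
  have h1 : (fun h : ℝ => if h ≤ y then Real.log h else 0)
      = Set.indicator (Set.Iic y) Real.log := by
    ext h; simp [Set.indicator_apply]
  rw [h1, setIntegral_indicator measurableSet_Iic, Set.Ioi_inter_Iic,
    ← intervalIntegral.integral_of_le hy, integral_log]
  simp

/-- Fubini step. -/
lemma aux_fubini {α : Type*} [MeasurableSpace α] (P : Measure α) [IsProbabilityMeasure P]
    (r : α → ℝ) (hr : Measurable r) (hr0 : 0 ≤ r)
    (hi : IntegrableOn (fun h => (P {x | h ≤ r x}).toReal * Real.log h) (Set.Ioi (0 : ℝ))) :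
    ∫ h in Set.Ioi (0 : ℝ), (P {x | h ≤ r x}).toReal * Real.log h
      = ∫ x, (r x * Real.log (r x) - r x) ∂P := by
  have hS : ∀ h : ℝ, MeasurableSet {x | h ≤ r x} := fun h => measurableSet_le measurable_const hr
  have hF : Measurable (fun p : α × ℝ => if p.2 ≤ r p.1 then Real.log p.2 else 0) :=
    Measurable.ite (measurableSet_le measurable_snd (hr.comp measurable_fst))
      (Real.measurable_log.comp measurable_snd) measurable_const
  have hind : ∀ (h c : ℝ), (fun x => if h ≤ r x then c else 0)
      = Set.indicator {x | h ≤ r x} (fun _ => c) := by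
    intro h c; ext x; simp [Set.indicator_apply]
  have hint : ∀ h c : ℝ, ∫ x, (if h ≤ r x then c else 0) ∂P = (P {x | h ≤ r x}).toReal * c := by
    intro h c
    rw [hind, integral_indicator (hS h), setIntegral_const]
    simp [Measure.real]
  have hprod : Integrable (fun p : α × ℝ => if p.2 ≤ r p.1 then Real.log p.2 else 0)
      (P.prod (volume.restrict (Set.Ioi (0 : ℝ)))) := by
    rw [integrable_prod_iff' hF.aestronglyMeasurable]
    constructor
    · refine Filter.Eventually.of_forall fun h => ?_
      simp only
      rw [hind]
      exact (integrable_const _).indicator (hS h)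
    · have : (fun h : ℝ => ∫ x, ‖(if h ≤ r x then Real.log h else 0)‖ ∂P)
          = fun h => ‖(P {x | h ≤ r x}).toReal * Real.log h‖ := by
        ext h
        rw [norm_mul, Real.norm_of_nonneg ENNReal.toReal_nonneg, ← hint h ‖Real.log h‖]
        congr 1
        ext x
        split_ifs <;> simp
      simp only
      rw [this]
      exact hi.norm
  have h1 := integral_integral_swap (f := fun (x : α) (h : ℝ) => if h ≤ r x then Real.log h else 0)
    hprod
  simp only [hint] at h1
  rw [← h1]
  exact integral_congr_ae (Filter.Eventually.of_forall fun x => aux_inner (r x) (hr0 x))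

/-- If `H` is a nonnegative random variable with probability density `w_P` (the width
function of `Q ≪ P`), then the channel simulation divergence and the KL divergence
(both in bits) satisfy `D_CS(Q‖P) - D_KL(Q‖P) = h(ln H) - log₂ e`, where `h(ln H)` is
the differential entropy (in bits) of `ln H`, whose density is `g`. -/
theorem csd_minus_kl_eq_entropy_of_log {α : Type*} [MeasurableSpace α]
    (P Q : Measure α) [IsProbabilityMeasure P] [IsProbabilityMeasure Q]
    (hQP : Q ≪ P)
    (r : α → ℝ) (hr : r = fun x => (Q.rnDeriv P x).toReal)
    (w : ℝ → ℝ) (hw : w = fun h => (P {x | h ≤ r x}).toReal)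
    -- `μH` is the law of the random variable `H`, with density `w` on `(0, ∞)`
    (μH : Measure ℝ)
    (hH : μH = (volume.restrict (Set.Ioi (0 : ℝ))).withDensity fun h => ENNReal.ofReal (w h))
    -- `g` is the density of `ln H` (the law of `ln H` is the pushforward of `μH` by `log`)
    (g : ℝ → ℝ) (hg0 : 0 ≤ g)
    (hg : μH.map Real.log = volume.withDensity fun t => ENNReal.ofReal (g t))
    -- all relevant integrals are assumed finite
    (hCS : IntegrableOn (fun h => w h * logb 2 (w h)) (Set.Ioi (0 : ℝ)))
    (hKL : Integrable (fun x => logb 2 (r x)) Q)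
    (hEnt : Integrable (fun t => g t * logb 2 (g t))) :
    (-∫ h in Set.Ioi (0 : ℝ), w h * logb 2 (w h)) - (∫ x, logb 2 (r x) ∂Q)
      = (-∫ t, g t * logb 2 (g t)) - logb 2 (Real.exp 1) := by
  have hrm : Measurable r := by
    rw [hr]; exact (Measure.measurable_rnDeriv Q P).ennreal_toReal
  have hr0 : 0 ≤ r := by
    rw [hr]; intro x; exact ENNReal.toReal_nonneg
  have hrint : Integrable r P := by
    rw [hr]; exact Measure.integrable_toReal_rnDeriv
  have hrone : ∫ x, r x ∂P = 1 := by
    rw [hr, Measure.integral_toReal_rnDeriv hQP]; simp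
  have hwanti : Antitone w := by
    rw [hw]
    intro a b hab
    exact ENNReal.toReal_mono (measure_ne_top _ _) (measure_mono fun x hx => le_trans hab hx)
  have hwm : Measurable w := hwanti.measurable
  have hw0 : ∀ h, 0 ≤ w h := by
    rw [hw]; intro h; exact ENNReal.toReal_nonneg
  have hwofReal : ∀ h, ENNReal.ofReal (w h) = P {x | h ≤ r x} := by
    intro h; rw [hw]; exact ENNReal.ofReal_toReal (measure_ne_top _ _)
  set v : ℝ → ℝ := fun t => Real.exp t * w (Real.exp t) with hvdef
  have hvm : Measurable v :=
    Real.measurable_exp.mul (hwm.comp Real.measurable_exp)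
  have hv0 : 0 ≤ v := fun t => mul_nonneg (Real.exp_pos t).le (hw0 _)
  have hmap := aux_map w hwm
  rw [← hH] at hmap
  have hfin : ∫⁻ t, ENNReal.ofReal (v t) ≠ ⊤ := by
    have h1 : ∫⁻ t, ENNReal.ofReal (v t) = μH Set.univ := by
      have := congrArg (fun μ : Measure ℝ => μ Set.univ) hmap
      rw [Measure.map_apply Real.measurable_log MeasurableSet.univ,
        withDensity_apply _ MeasurableSet.univ] at this
      simpa using this.symm
    rw [h1, hH, withDensity_apply _ MeasurableSet.univ, Measure.restrict_univ]
    simp only [hwofReal]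
    rw [← lintegral_eq_lintegral_meas_le P (Filter.Eventually.of_forall hr0) hrm.aemeasurable]
    exact hrint.lintegral_lt_top.ne
  have hl2 : Real.log 2 ≠ 0 := (Real.log_pos one_lt_two).ne'
  have hφ : Continuous (fun y : ℝ => y * logb 2 y) := by
    have : (fun y : ℝ => y * logb 2 y) = fun y => y * Real.log y / Real.log 2 := by
      ext y; simp only [logb]; ring
    rw [this]
    exact Real.continuous_mul_log.div_const _
  have hae := aux_ae_eq v g (fun y => y * logb 2 y) hφ hvm hv0 hg0 hfin (hg.symm.trans hmap)
    hEnt.aestronglyMeasurable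
  rw [integral_congr_ae hae]
  have hEnt' : Integrable (fun t => v t * logb 2 (v t)) := hEnt.congr hae
  have hCS' := (aux_integrable _).1 hCS
  rw [aux_int]
  have hsplit : ∀ t, v t * logb 2 (v t)
      = Real.exp t * (w (Real.exp t) * logb 2 (w (Real.exp t)))
        + Real.exp t * (w (Real.exp t) * Real.log (Real.exp t)) / Real.log 2 := by
    intro t
    simp only [hvdef]
    rcases (hw0 (Real.exp t)).eq_or_lt with h | h
    · simp [← h]
    · simp only [logb]
      rw [Real.log_mul (Real.exp_pos t).ne' h.ne']
      field_simp
      ring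
  have hL : Integrable (fun t => Real.exp t * (w (Real.exp t) * Real.log (Real.exp t))) := by
    have := (hEnt'.sub hCS').mul_const (Real.log 2)
    refine this.congr (Filter.Eventually.of_forall fun t => ?_)
    simp only [Pi.sub_apply]
    rw [hsplit t]
    field_simp
    ring
  have hL' : IntegrableOn (fun h => w h * Real.log h) (Set.Ioi (0 : ℝ)) :=
    (aux_integrable _).2 hL
  have hLval : ∫ h in Set.Ioi (0 : ℝ), w h * Real.log h
      = ∫ x, (r x * Real.log (r x) - r x) ∂P := by
    have h1 := aux_fubini P r hrm hr0 (by rw [hw] at hL'; exact hL')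
    rw [hw]; exact h1
  have hKLi : Integrable (fun x => r x * logb 2 (r x)) P := by
    have := (integrable_rnDeriv_smul_iff hQP (f := fun x => logb 2 (r x))).2 hKL
    rw [hr] at this ⊢
    exact this
  have hKLval : ∫ x, logb 2 (r x) ∂Q = ∫ x, r x * logb 2 (r x) ∂P := by
    rw [← integral_rnDeriv_smul hQP (f := fun x => logb 2 (r x))]
    rw [hr]; rfl
  have hlog : ∀ x, r x * Real.log (r x) = (r x * logb 2 (r x)) * Real.log 2 := by
    intro x; simp only [logb]; field_simp
  simp only [hlog] at hLval
  rw [integral_sub (hKLi.mul_const _) hrint, integral_mul_const, hrone, ← hKLval, aux_int] at hLval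
  have hsum : ∫ t, v t * logb 2 (v t) = ∫ t, (Real.exp t * (w (Real.exp t) * logb 2 (w (Real.exp t)))
        + Real.exp t * (w (Real.exp t) * Real.log (Real.exp t)) / Real.log 2) :=
    integral_congr_ae (Filter.Eventually.of_forall hsplit)
  rw [integral_add hCS' (hL.div_const _), integral_div, hLval] at hsum
  rw [hsum]
  simp only [logb, Real.log_exp]
  field_simp
  ring
end

section
/- Let X, Y be jointly distributed random variables where Y is discrete (or more generally Y = g(X, Z) with Z ⊥ X and each conditional law P_{Y|Z=z} purely atomic). Then D_KL(P_{X|Y=y} ‖ P_X) ≤ D_CS(P_{X|Y=y} ‖ P_X) for P_Y-almost every y, and hence I(X;Y) ≤ E_Y[ D_CS(P_{X|Y} ‖ P_X) ]. -/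
open MeasureTheory Real

section aux
variable {α : Type*} [MeasurableSpace α]

lemma aux_meas {r : α → ℝ} (hrm : Measurable r) : MeasurableSet {p : α × ℝ | p.2 ≤ r p.1} :=
  measurableSet_le measurable_snd (hrm.comp measurable_fst)

lemma aux_vol (a : ℝ) (ha : 0 ≤ a) :
    (volume.restrict (Set.Ioi (0 : ℝ))) (Set.Iic a) = ENNReal.ofReal a := by
  rw [Measure.restrict_apply measurableSet_Iic, Set.inter_comm, Set.Ioi_inter_Iic]
  simp

lemma aux_fst (P : Measure α) [IsProbabilityMeasure P] {r : α → ℝ} (hrm : Measurable r)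
    (hr0 : ∀ x, 0 ≤ r x) {f : α → ℝ} (hf : Measurable f) (hi : Integrable (fun x => r x * f x) P) :
    Integrable ({p : α × ℝ | p.2 ≤ r p.1}.indicator (fun p => f p.1))
      (P.prod (volume.restrict (Set.Ioi (0 : ℝ)))) ∧
    ∫ p, ({p : α × ℝ | p.2 ≤ r p.1}.indicator (fun p => f p.1)) p
      ∂(P.prod (volume.restrict (Set.Ioi (0 : ℝ)))) = ∫ x, r x * f x ∂P := by
  have hm : Measurable ({p : α × ℝ | p.2 ≤ r p.1}.indicator (fun p => f p.1)) :=
    (hf.comp measurable_fst).indicator (aux_meas hrm)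
  have hs : ∀ x, (fun h => ({p : α × ℝ | p.2 ≤ r p.1}.indicator (fun p => f p.1)) (x, h))
      = (Set.Iic (r x)).indicator (fun _ => f x) := fun x => by
    ext h; simp [Set.indicator]
  have hn : ∀ x (c : ℝ), ∫ h in Set.Ioi (0:ℝ), (Set.Iic (r x)).indicator (fun _ => c) h
      = r x * c := fun x c => by
    rw [integral_indicator_const _ measurableSet_Iic, Measure.real, aux_vol _ (hr0 x),
      ENNReal.toReal_ofReal (hr0 x), smul_eq_mul]
  have hI : Integrable ({p : α × ℝ | p.2 ≤ r p.1}.indicator (fun p => f p.1))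
      (P.prod (volume.restrict (Set.Ioi (0 : ℝ)))) := by
    rw [integrable_prod_iff hm.aestronglyMeasurable]
    refine ⟨Filter.Eventually.of_forall fun x => ?_, ?_⟩
    · rw [hs, integrable_indicator_iff measurableSet_Iic]
      refine integrableOn_const ?_
      rw [aux_vol _ (hr0 x)]; simp
    · refine hi.norm.congr (Filter.Eventually.of_forall fun x => ?_)
      have : (fun h => ‖({p : α × ℝ | p.2 ≤ r p.1}.indicator (fun p => f p.1)) (x, h)‖)
          = (Set.Iic (r x)).indicator (fun _ => ‖f x‖) := by
        ext h; rw [congrFun (hs x) h, norm_indicator_eq_indicator_norm]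
      simp only [this, hn, norm_mul, Real.norm_of_nonneg (hr0 x)]
  refine ⟨hI, ?_⟩
  rw [integral_prod _ hI]
  simp only [hs, hn]

lemma aux_snd (P : Measure α) [IsProbabilityMeasure P] {r : α → ℝ} (hrm : Measurable r)
    {g : ℝ → ℝ} (hg : Measurable g)
    (hi : IntegrableOn (fun h => (P {x | h ≤ r x}).toReal * g h) (Set.Ioi (0:ℝ))) :
    Integrable ({p : α × ℝ | p.2 ≤ r p.1}.indicator (fun p => g p.2))
      (P.prod (volume.restrict (Set.Ioi (0 : ℝ)))) ∧
    ∫ p, ({p : α × ℝ | p.2 ≤ r p.1}.indicator (fun p => g p.2)) p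
      ∂(P.prod (volume.restrict (Set.Ioi (0 : ℝ)))) =
      ∫ h in Set.Ioi (0:ℝ), (P {x | h ≤ r x}).toReal * g h := by
  have hm : Measurable ({p : α × ℝ | p.2 ≤ r p.1}.indicator (fun p => g p.2)) :=
    (hg.comp measurable_snd).indicator (aux_meas hrm)
  have hms : ∀ h, MeasurableSet {x | h ≤ r x} := fun h => measurableSet_le measurable_const hrm
  have hs : ∀ h, (fun x => ({p : α × ℝ | p.2 ≤ r p.1}.indicator (fun p => g p.2)) (x, h))
      = {x | h ≤ r x}.indicator (fun _ => g h) := fun h => by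
    ext x; simp [Set.indicator]
  have hn : ∀ h (c : ℝ), ∫ x, {x | h ≤ r x}.indicator (fun _ => c) x ∂P
      = (P {x | h ≤ r x}).toReal * c := fun h c => by
    rw [integral_indicator_const _ (hms h), Measure.real, smul_eq_mul]
  have hI : Integrable ({p : α × ℝ | p.2 ≤ r p.1}.indicator (fun p => g p.2))
      (P.prod (volume.restrict (Set.Ioi (0 : ℝ)))) := by
    rw [integrable_prod_iff' hm.aestronglyMeasurable]
    refine ⟨Filter.Eventually.of_forall fun h => ?_, ?_⟩
    · rw [hs, integrable_indicator_iff (hms h)]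
      exact integrableOn_const (by simp)
    · refine hi.norm.congr (Filter.Eventually.of_forall fun h => ?_)
      have : (fun x => ‖({p : α × ℝ | p.2 ≤ r p.1}.indicator (fun p => g p.2)) (x, h)‖)
          = {x | h ≤ r x}.indicator (fun _ => ‖g h‖) := by
        ext x; rw [congrFun (hs h) x, norm_indicator_eq_indicator_norm]
      simp only [this, hn, norm_mul, Real.norm_of_nonneg ENNReal.toReal_nonneg]
  refine ⟨hI, ?_⟩
  rw [integral_prod_symm _ hI]
  simp only [hs, hn]

lemma aux_main (P : Measure α) [IsProbabilityMeasure P] {r : α → ℝ} (hrm : Measurable r)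
    (hr0 : ∀ x, 0 ≤ r x) (hri : Integrable r P) (hr1 : ∫ x, r x ∂P = 1) {w : ℝ → ℝ}
    (hw : w = fun h => (P {x | h ≤ r x}).toReal)
    (h1 : Integrable (fun x => r x * log (r x)) P)
    (h2 : IntegrableOn (fun h => w h * log (w h)) (Set.Ioi (0:ℝ))) :
    ∫ x, r x * log (r x) ∂P ≤ - ∫ h in Set.Ioi (0:ℝ), w h * log (w h) := by
  have hwm : Measurable w := by
    refine Antitone.measurable ?_
    subst hw
    intro a b hab
    exact ENNReal.toReal_mono (by simp) (measure_mono fun x hx => le_trans hab hx)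
  have hw0 : ∀ h, 0 ≤ w h := fun h => by rw [hw]; exact ENNReal.toReal_nonneg
  obtain ⟨iF, eF⟩ := aux_fst P hrm hr0 (hrm.log) h1
  obtain ⟨iG, eG⟩ := aux_snd P hrm (g := fun h => log (w h)) hwm.log (by simpa [hw] using h2)
  obtain ⟨iO, eO⟩ := aux_fst P hrm hr0 (f := fun _ => 1) measurable_const (by simpa using hri)
  have hwi : IntegrableOn w (Set.Ioi 0) ∧ ∫ h in Set.Ioi (0:ℝ), w h = 1 := by
    have hsw : ∀ h, ∫ x, ({p : α × ℝ | p.2 ≤ r p.1}.indicator (fun _ => (1:ℝ))) (x, h) ∂P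
        = w h := fun h => by
      have : (fun x => ({p : α × ℝ | p.2 ≤ r p.1}.indicator (fun _ => (1:ℝ))) (x, h))
        = {x | h ≤ r x}.indicator (fun _ => 1) := by ext x; simp [Set.indicator]
      rw [this, integral_indicator_const _ (measurableSet_le measurable_const hrm), hw]
      simp [Measure.real]
    have a := iO.integral_prod_right
    have b := integral_prod_symm _ iO
    simp only [hsw] at a b
    refine ⟨a, ?_⟩
    rw [← b, eO]; simpa using hr1
  obtain ⟨iZ, eZ⟩ := aux_snd P hrm (g := {h | w h = 0}.indicator (fun _ => 1))
    (measurable_const.indicator (hwm (measurableSet_singleton 0))) (by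
      have : (fun h => (P {x | h ≤ r x}).toReal * {h | w h = 0}.indicator (fun _ => (1:ℝ)) h)
        = fun _ => 0 := by
        ext h
        by_cases hh : w h = 0
        · simp only [hw] at hh; rw [hh]; simp
        · simp [Set.indicator, hh]
      rw [this]; exact integrableOn_zero)
  have hZ : ∀ᵐ p ∂(P.prod (volume.restrict (Set.Ioi (0 : ℝ)))), p.2 ≤ r p.1 → w p.2 ≠ 0 := by
    have e0 : ∫ h in Set.Ioi (0:ℝ), (P {x | h ≤ r x}).toReal *
        {h | w h = 0}.indicator (fun _ => (1:ℝ)) h = 0 := by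
      refine integral_eq_zero_of_ae (Filter.Eventually.of_forall fun h => ?_)
      beta_reduce
      by_cases hh : w h = 0
      · simp only [hw] at hh; rw [hh]; simp
      · simp [Set.indicator, hh]
    rw [e0, integral_eq_zero_iff_of_nonneg _ iZ] at eZ
    · filter_upwards [eZ] with p hp hle h0
      simp [Set.indicator, hle, h0] at hp
    · intro p
      simp only [Set.indicator]
      split_ifs <;> simp
  have hpos : ∀ᵐ p ∂(P.prod (volume.restrict (Set.Ioi (0 : ℝ)))), 0 < p.2 :=
    Measure.quasiMeasurePreserving_snd.ae (ae_restrict_mem measurableSet_Ioi)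
  have iK : Integrable (fun p : α × ℝ => r p.1 * w p.2)
      (P.prod (volume.restrict (Set.Ioi (0 : ℝ)))) := hri.mul_prod hwi.1
  have eK : ∫ p : α × ℝ, r p.1 * w p.2 ∂(P.prod (volume.restrict (Set.Ioi (0 : ℝ)))) = 1 := by
    rw [integral_prod_mul, hr1, hwi.2, one_mul]
  have key := integral_mono_ae (iF.add iG) (iK.sub iO) (by
    filter_upwards [hZ, hpos] with p hz hp
    by_cases hle : p.2 ≤ r p.1
    · have hr : 0 < r p.1 := lt_of_lt_of_le hp hle
      have hw' : 0 < w p.2 := lt_of_le_of_ne (hw0 _) (Ne.symm (hz hle))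
      have := Real.log_le_sub_one_of_pos (mul_pos hr hw')
      rw [Real.log_mul hr.ne' hw'.ne'] at this
      simpa [Set.indicator, hle] using this
    · simpa [Set.indicator, hle] using mul_nonneg (hr0 p.1) (hw0 p.2))
  rw [integral_add' iF iG, integral_sub' iK iO, eF, eG, eK, eO] at key
  simp only [mul_one, hr1] at key
  have hw' : ∀ h, (P {x | h ≤ r x}).toReal = w h := fun h => by rw [hw]
  simp only [hw'] at key
  linarith

lemma aux_pt (P Q : Measure α) [IsProbabilityMeasure P] [IsProbabilityMeasure Q] (hQ : Q ≪ P)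
    {r : α → ℝ} (hr : r = fun x => (Q.rnDeriv P x).toReal) {w : ℝ → ℝ}
    (hw : w = fun h => (P {x | h ≤ r x}).toReal)
    (h1 : Integrable (fun x => logb 2 (r x)) Q)
    (h2 : IntegrableOn (fun h => w h * logb 2 (w h)) (Set.Ioi (0:ℝ))) :
    ∫ x, logb 2 (r x) ∂Q ≤ - ∫ h in Set.Ioi (0:ℝ), w h * logb 2 (w h) := by
  have hl : 0 < log 2 := Real.log_pos (by norm_num)
  have e : ∀ x, logb 2 x = log x / log 2 := fun x => rfl
  have hrm : Measurable r := by rw [hr]; exact (Measure.measurable_rnDeriv Q P).ennreal_toReal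
  have h1' : Integrable (fun x => log (r x)) Q := by
    refine (h1.mul_const (log 2)).congr (Filter.Eventually.of_forall fun x => ?_)
    simp only [e]; field_simp
  have h2' : IntegrableOn (fun h => w h * log (w h)) (Set.Ioi (0:ℝ)) := by
    refine Integrable.congr (Integrable.mul_const h2 (log 2)) (Filter.Eventually.of_forall fun x => ?_)
    simp only [e]; field_simp
  have h1'' : Integrable (fun x => r x * log (r x)) P := by
    have := (integrable_rnDeriv_smul_iff hQ (f := fun x => log (r x))).2 h1'
    simpa [hr] using this
  have hi : ∫ x, r x * log (r x) ∂P = ∫ x, log (r x) ∂Q := by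
    have := integral_rnDeriv_smul hQ (f := fun x => log (r x))
    simpa [hr] using this
  have hr1 : ∫ x, r x ∂P = 1 := by
    rw [hr]
    have := Measure.integral_toReal_rnDeriv hQ
    simpa using this
  have := aux_main P hrm (fun x => by rw [hr]; exact ENNReal.toReal_nonneg)
    (by rw [hr]; exact Measure.integrable_toReal_rnDeriv) hr1 hw h1'' h2'
  rw [hi] at this
  simp only [e, ← mul_div_assoc]
  rw [integral_div, integral_div, ← neg_div]
  exact div_le_div_of_nonneg_right this hl.le

end aux

/-- For a family of conditional distributions `μ y = P_{X|Y=y} ≪ P_X` (with `ν` the law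
of `Y`), the pointwise inequality `D_KL(P_{X|Y=y} ‖ P_X) ≤ D_CS(P_{X|Y=y} ‖ P_X)` holds
for `ν`-almost every `y`, and hence `I(X;Y) = E_Y[D_KL] ≤ E_Y[D_CS]` (divergences in
bits). -/
theorem kl_le_csd_and_mutualInfo_le {α 𝒴 : Type*} [MeasurableSpace α] [MeasurableSpace 𝒴]
    (PX : Measure α) [IsProbabilityMeasure PX]
    (ν : Measure 𝒴) [IsProbabilityMeasure ν]
    (μ : 𝒴 → Measure α) [∀ y, IsProbabilityMeasure (μ y)]
    (habs : ∀ᵐ y ∂ν, μ y ≪ PX)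
    (r : 𝒴 → α → ℝ) (hr : r = fun y x => ((μ y).rnDeriv PX x).toReal)
    (w : 𝒴 → ℝ → ℝ) (hw : w = fun y h => (PX {x | h ≤ r y x}).toReal)
    (DKL DCS : 𝒴 → ℝ)
    (hDKL : DKL = fun y => ∫ x, logb 2 (r y x) ∂(μ y))
    (hDCS : DCS = fun y => -∫ h in Set.Ioi (0 : ℝ), w y h * logb 2 (w y h))
    -- finiteness of the divergences and of their expectations
    (hKLfin : ∀ᵐ y ∂ν, Integrable (fun x => logb 2 (r y x)) (μ y))
    (hCSfin : ∀ᵐ y ∂ν, IntegrableOn (fun h => w y h * logb 2 (w y h)) (Set.Ioi (0 : ℝ)))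
    (hKLint : Integrable DKL ν) (hCSint : Integrable DCS ν) :
    (∀ᵐ y ∂ν, DKL y ≤ DCS y) ∧ ∫ y, DKL y ∂ν ≤ ∫ y, DCS y ∂ν := by
  have hae : ∀ᵐ y ∂ν, DKL y ≤ DCS y := by
    filter_upwards [habs, hKLfin, hCSfin] with y ha h1 h2
    rw [hDKL, hDCS]
    exact aux_pt PX (μ y) ha (by rw [hr]) (by rw [hw]) h1 h2
  exact ⟨hae, integral_mono_ae hKLint hCSint hae⟩
end
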